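/- If k_0 + k_1 < 0 and a(k_0 − k_1) < 0, then, with d* = √(2a(k_0 − k_1)/(k_0 + k_1)) (which is a positive real number under these hypotheses), f is strictly decreasing on (0, d*) and strictly increasing on (d*, ∞); in particular, d* is the unique global minimizer of f on (0,∞). -/

import Mathlib

/-- The standard Gaussian tail function `Q(x) = ∫_x^∞ (1/√(2π)) e^{-t²/2} dt`. -/
noncomputable def Q (x : ℝ) : ℝ :=
  ∫ t in Set.Ioi x, (1 / Real.sqrt (2 * Real.pi)) * Real.exp (-t ^ 2 / 2)

/-- The transmitter's (normalized) Bayes risk as a function of the normalized signal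
separation `d`, when the receiver applies the likelihood-ratio test with threshold
`τ = eᵃ`: `f(d) = k₀ e^{a/2} Q(a/d + d/2) + k₁ e^{-a/2} Q(d/2 - a/d)`. -/
noncomputable def f (a k0 k1 d : ℝ) : ℝ :=
  k0 * Real.exp (a / 2) * Q (a / d + d / 2) + k1 * Real.exp (-(a / 2)) * Q (d / 2 - a / d)

lemma Q_hasDerivAt (x : ℝ) :
    HasDerivAt Q (-((1 / Real.sqrt (2 * Real.pi)) * Real.exp (-x ^ 2 / 2))) x := by
  set g : ℝ → ℝ := fun t => (1 / Real.sqrt (2 * Real.pi)) * Real.exp (-t ^ 2 / 2) with hg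
  have hc : Continuous g := by fun_prop
  have hi : MeasureTheory.Integrable g := by
    have h := (integrable_exp_neg_mul_sq (b := 1 / 2) (by norm_num)).const_mul
      (1 / Real.sqrt (2 * Real.pi))
    refine h.congr (Filter.Eventually.of_forall fun t => ?_)
    simp only [hg]
    congr 2
    ring
  have hQ : Q = fun y => (∫ t in Set.Ioi (0 : ℝ), g t) - ∫ t in (0 : ℝ)..y, g t := by
    funext y
    have := intervalIntegral.integral_interval_add_Ioi (f := g) (a := 0) (b := y)
      hi.integrableOn hi.integrableOn
    have h2 : Q y = ∫ t in Set.Ioi y, g t := rfl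
    rw [h2]
    linarith
  rw [hQ]
  have := (hc.integral_hasStrictDerivAt 0 x).hasDerivAt.const_sub (∫ t in Set.Ioi (0 : ℝ), g t)
  exact this

lemma f_hasDerivAt (a k0 k1 d : ℝ) (hd : 0 < d) :
    HasDerivAt (f a k0 k1)
      ((1 / Real.sqrt (2 * Real.pi)) * Real.exp (-(a ^ 2 / (2 * d ^ 2)) - d ^ 2 / 8) / (2 * d ^ 2)
        * (2 * a * (k0 - k1) - (k0 + k1) * d ^ 2)) d := by
  have hd0 : d ≠ 0 := hd.ne'
  have h1 : HasDerivAt (fun x : ℝ => a / x) (-a / d ^ 2) d := by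
    have h := ((hasDerivAt_inv hd0).const_mul a).congr_deriv
      (show a * -(d ^ 2)⁻¹ = -a / d ^ 2 by ring)
    exact h
  have h2 : HasDerivAt (fun x : ℝ => x / 2) (1 / 2) d := (hasDerivAt_id d).div_const 2
  have hA := ((Q_hasDerivAt (a / d + d / 2)).comp d (h1.add h2)).const_mul (k0 * Real.exp (a / 2))
  have hB := ((Q_hasDerivAt (d / 2 - a / d)).comp d (h2.sub h1)).const_mul
    (k1 * Real.exp (-(a / 2)))
  have e1 : Real.exp (-(a / d + d / 2) ^ 2 / 2) =
      Real.exp (-(a ^ 2 / (2 * d ^ 2)) - d ^ 2 / 8) * Real.exp (-(a / 2)) := by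
    rw [← Real.exp_add]; congr 1; field_simp; ring
  have e2 : Real.exp (-(d / 2 - a / d) ^ 2 / 2) =
      Real.exp (-(a ^ 2 / (2 * d ^ 2)) - d ^ 2 / 8) * Real.exp (a / 2) := by
    rw [← Real.exp_add]; congr 1; field_simp; ring
  have e3 : Real.exp (a / 2) * Real.exp (-(a / 2)) = 1 := by
    rw [← Real.exp_add]; simp
  rw [e1] at hA
  rw [e2] at hB
  refine (hA.add hB).congr_deriv ?_
  generalize Real.exp (-(a ^ 2 / (2 * d ^ 2)) - d ^ 2 / 8) = E at *
  generalize 1 / Real.sqrt (2 * Real.pi) = c at *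
  generalize Real.exp (a / 2) = u at *
  generalize Real.exp (-(a / 2)) = v at *
  have : k0 * u * (-(c * (E * v)) * (-a / d ^ 2 + 1 / 2)) +
      k1 * v * (-(c * (E * u)) * (1 / 2 - -a / d ^ 2)) =
      (u * v) * (-(c * E) * (k0 * (-a / d ^ 2 + 1 / 2) + k1 * (1 / 2 - -a / d ^ 2))) := by ring
  rw [this, e3]
  field_simp
  ring

/-- If `k₀ + k₁ < 0` and `a(k₀ - k₁) < 0`, then with `d* = √(2a(k₀-k₁)/(k₀+k₁))`
(positive under these hypotheses), `f` is strictly decreasing on `(0, d*)` and strictly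
increasing on `(d*, ∞)`; in particular `d*` is the unique global minimizer of `f` on
`(0, ∞)`. -/
theorem stmt_10 (a k0 k1 : ℝ) (hsum : k0 + k1 < 0) (hdiff : a * (k0 - k1) < 0) :
    0 < Real.sqrt (2 * a * (k0 - k1) / (k0 + k1))
      ∧ StrictAntiOn (f a k0 k1) (Set.Ioo 0 (Real.sqrt (2 * a * (k0 - k1) / (k0 + k1))))
      ∧ StrictMonoOn (f a k0 k1) (Set.Ioi (Real.sqrt (2 * a * (k0 - k1) / (k0 + k1))))
      ∧ ∀ d : ℝ, 0 < d → d ≠ Real.sqrt (2 * a * (k0 - k1) / (k0 + k1)) →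
          f a k0 k1 (Real.sqrt (2 * a * (k0 - k1) / (k0 + k1))) < f a k0 k1 d := by
  have hR : 0 < 2 * a * (k0 - k1) / (k0 + k1) := div_pos_of_neg_of_neg (by linarith) hsum
  have hD : 0 < Real.sqrt (2 * a * (k0 - k1) / (k0 + k1)) := Real.sqrt_pos.2 hR
  have hsq := Real.sq_sqrt hR.le
  generalize Real.sqrt (2 * a * (k0 - k1) / (k0 + k1)) = D at *
  have hK : 2 * a * (k0 - k1) = (k0 + k1) * D ^ 2 := by
    rw [hsq]; field_simp [hsum.ne]
  have hc : 0 < 1 / Real.sqrt (2 * Real.pi) := by positivity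
  have hcont : ∀ x, 0 < x → ContinuousAt (f a k0 k1) x := fun x hx =>
    (f_hasDerivAt a k0 k1 x hx).continuousAt
  have anti : StrictAntiOn (f a k0 k1) (Set.Ioc 0 D) := by
    refine strictAntiOn_of_deriv_neg (convex_Ioc 0 D)
      (fun x hx => (hcont x hx.1).continuousWithinAt) ?_
    intro x hx
    rw [interior_Ioc] at hx
    have hx0 : 0 < x := hx.1
    rw [(f_hasDerivAt a k0 k1 x hx0).deriv, hK]
    refine mul_neg_of_pos_of_neg (by positivity) ?_
    have : x ^ 2 < D ^ 2 := pow_lt_pow_left₀ hx.2 hx0.le two_ne_zero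
    nlinarith
  have mono : StrictMonoOn (f a k0 k1) (Set.Ici D) := by
    refine strictMonoOn_of_deriv_pos (convex_Ici D)
      (fun x hx => (hcont x (hD.trans_le hx)).continuousWithinAt) ?_
    intro x hx
    rw [interior_Ici] at hx
    have hx0 : 0 < x := hD.trans hx
    rw [(f_hasDerivAt a k0 k1 x hx0).deriv, hK]
    refine mul_pos (by positivity) ?_
    have : D ^ 2 < x ^ 2 := pow_lt_pow_left₀ hx hD.le two_ne_zero
    nlinarith
  refine ⟨hD, anti.mono Set.Ioo_subset_Ioc_self, mono.mono Set.Ioi_subset_Ici_self, ?_⟩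
  intro d hd hne
  rcases lt_or_gt_of_ne hne with h | h
  · exact anti ⟨hd, h.le⟩ ⟨hD, le_rfl⟩ h
  · exact mono (Set.self_mem_Ici) (Set.mem_Ici.2 h.le) h
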